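/- Let d and K be positive natural numbers, let Σ and C_1, …, C_K be positive definite real d×d matrices, let μ_1, …, μ_K ∈ ℝ^d, and let p_1, …, p_K be nonnegative reals with Σ_{k=1}^K p_k = 1 and at least one p_k > 0. Denote by N(x; m, A) = (2π)^{-d/2} (det A)^{-1/2} exp(-(x−m)ᵀ A⁻¹ (x−m)/2) the Gaussian density with mean m and positive definite covariance A, and let f(h) = Σ_{k=1}^K p_k N(h; μ_k, C_k) be the Gaussian mixture density. For y ∈ ℝ^d define the responsibilities p(k|y) = p_k N(y; μ_k, C_k + Σ) / (Σ_{i=1}^K p_i N(y; μ_i, C_i + Σ)). Then for every y ∈ ℝ^d, the posterior mean satisfies (∫_{ℝ^d} h · N(y−h; 0, Σ) · f(h) dh) / (∫_{ℝ^d} N(y−h; 0, Σ) · f(h) dh) = Σ_{k=1}^K p(k|y) · ( C_k (C_k+Σ)⁻¹ (y − μ_k) + μ_k ). -/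

import Mathlib

/-!
For a single component, completing the square in `h` writes the joint density
`N(y - h; 0, Σ) N(h; μ, C)` as `N(y; μ, C + Σ)` times the Gaussian density in `h` with mean
`C (C + Σ)⁻¹ (y - μ) + μ` and covariance `(Σ⁻¹ + C⁻¹)⁻¹` (`gaussDensity_mul_gaussDensity`).
So the joint density of the mixture is a finite combination of Gaussian densities in `h`. Each of
them has total mass one (`integral_gaussDensity`) and first moment equal to its mean
(`integral_gaussDensity_smul`), so the two integrals are finite sums whose quotient is the claimed
expression.

The mass is computed by factoring `A⁻¹ = Lᵀ L` and substituting `z = L (x - m)`, which reduces it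
to the standard Gaussian integral. The same substitution shows that the first moment is absolutely
convergent, and its value follows from the symmetry of the centred density.
-/

open MeasureTheory Matrix Filter

/-- The Gaussian density with mean `m` and covariance matrix `A` on `ℝ^d`. -/
noncomputable def gaussDensity {d : ℕ} (m : EuclideanSpace ℝ (Fin d)) (A : Matrix (Fin d) (Fin d) ℝ)
    (x : EuclideanSpace ℝ (Fin d)) : ℝ :=
  (2 * Real.pi) ^ (-(d : ℝ) / 2) * A.det ^ (-(1 : ℝ) / 2) *
    Real.exp (-((fun i => x i - m i) ⬝ᵥ (A⁻¹ *ᵥ fun i => x i - m i)) / 2)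

/-- A positive definite real matrix factors as `Lᵀ L` with `L` invertible. -/
lemma posDef_factor {d : ℕ} {A : Matrix (Fin d) (Fin d) ℝ} (hA : A.PosDef) :
    ∃ L : Matrix (Fin d) (Fin d) ℝ, L.det ≠ 0 ∧ A = Lᵀ * L := by
  open scoped MatrixOrder in
  obtain ⟨L, hL⟩ := (CStarAlgebra.nonneg_iff_eq_star_mul_self (a := A)).1 hA.posSemidef.nonneg
  refine ⟨L, fun h0 => hA.det_pos.ne' ?_, ?_⟩
  · rw [hL, det_mul, h0, mul_zero]
  · rw [hL, star_eq_conjTranspose, conjTranspose_eq_transpose_of_trivial]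

/-! ### The standard Gaussian weight -/

section StandardGaussian

variable {E : Type*} [NormedAddCommGroup E] [InnerProductSpace ℝ E] [FiniteDimensional ℝ E]
  [MeasurableSpace E] [BorelSpace E]

lemma integrable_exp_neg_mul_sq_norm {b : ℝ} (hb : 0 < b) :
    Integrable fun v : E => Real.exp (-b * ‖v‖ ^ 2) := by
  refine Integrable.of_integral_ne_zero ?_
  rw [GaussianFourier.integral_rexp_neg_mul_sq_norm hb]
  positivity

/-- The standard Gaussian weight has a finite first moment, by the bound
`t * exp (-t² / 2) ≤ exp (-t² / 4)`. -/
lemma integrable_exp_neg_half_sq_norm_smul :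
    Integrable fun v : E => Real.exp (-(1 / 2) * ‖v‖ ^ 2) • v := by
  refine (integrable_exp_neg_mul_sq_norm (E := E) (b := 1 / 4) (by norm_num)).mono
    (by fun_prop) (ae_of_all _ fun v => ?_)
  rw [norm_smul, Real.norm_of_nonneg (Real.exp_pos _).le, Real.norm_of_nonneg (Real.exp_pos _).le]
  have h1 : ‖v‖ ≤ Real.exp (1 / 4 * ‖v‖ ^ 2) := by
    nlinarith [Real.add_one_le_exp (1 / 4 * ‖v‖ ^ 2), sq_nonneg (‖v‖ / 2 - 1)]
  calc _ ≤ Real.exp (-(1 / 2) * ‖v‖ ^ 2) * Real.exp (1 / 4 * ‖v‖ ^ 2) := by gcongr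
    _ = _ := by rw [← Real.exp_add]; congr 1; ring

end StandardGaussian

/-! ### Mass and first moment of a Gaussian density -/

section GaussDensity

variable {d : ℕ} {A : Matrix (Fin d) (Fin d) ℝ}

/-- Whitening: if `A⁻¹ = Lᵀ L`, the quadratic form of `A⁻¹` is the squared norm of `L (x - m)`. -/
lemma gaussDensity_eq_of_factor {L : Matrix (Fin d) (Fin d) ℝ} (hL : A⁻¹ = Lᵀ * L)
    (m x : EuclideanSpace ℝ (Fin d)) :
    gaussDensity m A x = (2 * Real.pi) ^ (-(d : ℝ) / 2) * A.det ^ (-(1 : ℝ) / 2) *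
      Real.exp (-(1 / 2) * ‖toEuclideanLin L (x - m)‖ ^ 2) := by
  have h : ‖toEuclideanLin L (x - m)‖ ^ 2 =
      (fun i => x i - m i) ⬝ᵥ (A⁻¹ *ᵥ fun i => x i - m i) := by
    rw [hL, ← mulVec_mulVec, dotProduct_mulVec, vecMul_transpose, EuclideanSpace.real_norm_sq_eq]
    simp only [dotProduct, ← pow_two]
    rfl
  rw [gaussDensity, h]
  congr 2
  ring

lemma det_toEuclideanLin (L : Matrix (Fin d) (Fin d) ℝ) :
    LinearMap.det (toEuclideanLin L) = L.det := by
  rw [← LinearMap.det_toLin (PiLp.basisFun 2 ℝ (Fin d)) L, ← toLpLin_eq_toLin]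

lemma map_toEuclideanLin_volume {L : Matrix (Fin d) (Fin d) ℝ} (hL : L.det ≠ 0) :
    (volume : Measure (EuclideanSpace ℝ (Fin d))).map (toEuclideanLin L) =
      ENNReal.ofReal |L.det⁻¹| • volume := by
  rw [Measure.map_linearMap_addHaar_eq_smul_addHaar _ (by rwa [det_toEuclideanLin]),
    det_toEuclideanLin]

lemma integrable_comp_toEuclideanLin {F : Type*} [NormedAddCommGroup F]
    {L : Matrix (Fin d) (Fin d) ℝ} (hL : L.det ≠ 0)
    {f : EuclideanSpace ℝ (Fin d) → F} (hf : Integrable f) :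
    Integrable fun x => f (toEuclideanLin L x) := by
  have h : Integrable f ((volume : Measure (EuclideanSpace ℝ (Fin d))).map (toEuclideanLin L)) := by
    rw [map_toEuclideanLin_volume hL]
    exact hf.smul_measure ENNReal.ofReal_ne_top
  exact h.comp_measurable (LinearMap.continuous_of_finiteDimensional _).measurable

lemma integral_comp_toEuclideanLin {L : Matrix (Fin d) (Fin d) ℝ} (hL : L.det ≠ 0)
    {f : EuclideanSpace ℝ (Fin d) → ℝ} (hf : Continuous f) :
    ∫ x, f (toEuclideanLin L x) = |L.det|⁻¹ * ∫ x, f x := by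
  rw [← integral_map (LinearMap.continuous_of_finiteDimensional _).aemeasurable
    hf.aestronglyMeasurable, map_toEuclideanLin_volume hL, integral_smul_measure,
    ENNReal.toReal_ofReal (abs_nonneg _), abs_inv, smul_eq_mul]

/-- The density at mean `m` is a translate of the centred one. -/
lemma gaussDensity_eq_zero_sub (m x : EuclideanSpace ℝ (Fin d)) :
    gaussDensity m A x = gaussDensity 0 A (x - m) := by
  simp [gaussDensity]

lemma gaussDensity_zero_neg (x : EuclideanSpace ℝ (Fin d)) :
    gaussDensity 0 A (-x) = gaussDensity 0 A x := by
  have h : (fun i => (-x) i - (0 : EuclideanSpace ℝ (Fin d)) i) =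
      -(fun i => x i - (0 : EuclideanSpace ℝ (Fin d)) i) := by ext i; simp
  simp only [gaussDensity, h, mulVec_neg, neg_dotProduct, dotProduct_neg, neg_neg]

lemma integrable_gaussDensity (hA : A.PosDef) (m : EuclideanSpace ℝ (Fin d)) :
    Integrable (gaussDensity m A) := by
  obtain ⟨L, hL0, hL⟩ := posDef_factor hA.inv
  have h := ((integrable_comp_toEuclideanLin hL0 (integrable_exp_neg_mul_sq_norm
    (b := 1 / 2) (by norm_num))).const_mul
      ((2 * Real.pi) ^ (-(d : ℝ) / 2) * A.det ^ (-(1 : ℝ) / 2))).comp_sub_right m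
  exact h.congr (ae_of_all _ fun x => (gaussDensity_eq_of_factor hL m x).symm)

lemma integral_gaussDensity (hA : A.PosDef) (m : EuclideanSpace ℝ (Fin d)) :
    ∫ x, gaussDensity m A x = 1 := by
  obtain ⟨L, hL0, hL⟩ := posDef_factor hA.inv
  have hdet : A.det = (|L.det| ^ 2)⁻¹ := by
    have h := congrArg det hL
    rw [det_nonsing_inv, Ring.inverse_eq_inv', det_mul, det_transpose] at h
    rw [sq_abs, pow_two, ← h, inv_inv]
  have hLp : 0 < |L.det| := abs_pos.2 hL0
  have hdet' : A.det ^ (-(1 : ℝ) / 2) = |L.det| := by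
    rw [hdet, Real.inv_rpow (by positivity), ← Real.rpow_natCast, ← Real.rpow_mul hLp.le,
      ← Real.rpow_neg hLp.le]
    norm_num
  simp_rw [gaussDensity_eq_zero_sub m]
  rw [integral_sub_right_eq_self (gaussDensity 0 A)]
  simp_rw [gaussDensity_eq_of_factor hL, sub_zero]
  rw [integral_const_mul, integral_comp_toEuclideanLin hL0
    (f := fun x => Real.exp (-(1 / 2) * ‖x‖ ^ 2)) (by fun_prop),
    GaussianFourier.integral_rexp_neg_mul_sq_norm (by norm_num), hdet', finrank_euclideanSpace_fin,
    neg_div, Real.rpow_neg (by positivity), show Real.pi / (1 / 2) = 2 * Real.pi by ring]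
  field_simp

lemma integrable_gaussDensity_zero_smul (hA : A.PosDef) :
    Integrable fun x => gaussDensity 0 A x • x := by
  obtain ⟨L, hL0, hL⟩ := posDef_factor hA.inv
  have h := (LinearMap.toContinuousLinearMap (toEuclideanLin L⁻¹)).integrable_comp
    (integrable_comp_toEuclideanLin hL0 integrable_exp_neg_half_sq_norm_smul)
  have hinv : ∀ x, toEuclideanLin L⁻¹ (toEuclideanLin L x) = x := fun x => by
    ext i
    simp [toLpLin_apply, mulVec_mulVec, nonsing_inv_mul _ hL0.isUnit]
  refine (h.smul ((2 * Real.pi) ^ (-(d : ℝ) / 2) * A.det ^ (-(1 : ℝ) / 2))).congr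
    (ae_of_all _ fun x => ?_)
  simp only [Pi.smul_apply, LinearMap.coe_toContinuousLinearMap', map_smul, hinv,
    gaussDensity_eq_of_factor hL, sub_zero, smul_smul]

/-- The first moment of the centred density vanishes because the integrand is odd. -/
lemma integral_gaussDensity_zero_smul :
    ∫ x : EuclideanSpace ℝ (Fin d), gaussDensity 0 A x • x = 0 := by
  have h := integral_neg_eq_self (fun x => gaussDensity 0 A x • x)
    (volume : Measure (EuclideanSpace ℝ (Fin d)))
  simp only [gaussDensity_zero_neg, smul_neg, integral_neg] at h
  have h2 : (2 : ℝ) • ∫ x : EuclideanSpace ℝ (Fin d), gaussDensity 0 A x • x = 0 := by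
    rw [two_smul]
    exact add_eq_zero_iff_eq_neg.2 h.symm
  exact (smul_eq_zero.1 h2).resolve_left two_ne_zero

lemma integrable_gaussDensity_smul (hA : A.PosDef) (m : EuclideanSpace ℝ (Fin d)) :
    Integrable fun x => gaussDensity m A x • x := by
  have h := ((integrable_gaussDensity_zero_smul hA).comp_sub_right m).add
    ((integrable_gaussDensity hA m).smul_const m)
  refine h.congr (ae_of_all _ fun x => ?_)
  simp [gaussDensity_eq_zero_sub m x, smul_sub]

lemma integral_gaussDensity_smul (hA : A.PosDef) (m : EuclideanSpace ℝ (Fin d)) :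
    ∫ x, gaussDensity m A x • x = m := by
  have h : ∀ x, gaussDensity m A x • x =
      gaussDensity 0 A (x - m) • (x - m) + gaussDensity m A x • m := fun x => by
    simp [gaussDensity_eq_zero_sub m x, smul_sub]
  simp_rw [h]
  rw [integral_add ((integrable_gaussDensity_zero_smul hA).comp_sub_right m)
    ((integrable_gaussDensity hA m).smul_const m),
    integral_sub_right_eq_self (fun x => gaussDensity 0 A x • x), integral_gaussDensity_zero_smul,
    integral_smul_const, integral_gaussDensity hA, one_smul, zero_add]

end GaussDensity

/-! ### Factoring the joint density of one component -/

section ProductOfGaussians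

variable {d : ℕ} {S C : Matrix (Fin d) (Fin d) ℝ}

lemma inv_add_inv_eq (hS : S.PosDef) (hC : C.PosDef) : S⁻¹ + C⁻¹ = S⁻¹ * (C + S) * C⁻¹ := by
  rw [mul_add, add_mul, mul_assoc, mul_nonsing_inv _ hC.det_pos.ne'.isUnit,
    nonsing_inv_mul _ hS.det_pos.ne'.isUnit, mul_one, one_mul]

/-- Completing the square in `v`; the minimizer is `w = C (C + S)⁻¹ u`, which solves
`(S⁻¹ + C⁻¹) w = S⁻¹ u`. -/
lemma complete_square (hS : S.PosDef) (hC : C.PosDef) (u v : Fin d → ℝ) :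
    (u - v) ⬝ᵥ (S⁻¹ *ᵥ (u - v)) + v ⬝ᵥ (C⁻¹ *ᵥ v) =
      u ⬝ᵥ ((C + S)⁻¹ *ᵥ u) + (v - (C * (C + S)⁻¹) *ᵥ u) ⬝ᵥ
        ((S⁻¹ + C⁻¹) *ᵥ (v - (C * (C + S)⁻¹) *ᵥ u)) := by
  have hSu := hS.det_pos.ne'.isUnit
  have hCu := hC.det_pos.ne'.isUnit
  have hPu := (hC.add hS).det_pos.ne'.isUnit
  have symm : ∀ {B : Matrix (Fin d) (Fin d) ℝ}, B.PosDef → ∀ a b : Fin d → ℝ,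
      a ⬝ᵥ (B *ᵥ b) = b ⬝ᵥ (B *ᵥ a) := fun {B} hB a b => by
    have hT : Bᵀ = B := by
      rw [← conjTranspose_eq_transpose_of_trivial]; exact hB.isHermitian
    rw [dotProduct_mulVec, dotProduct_comm, ← mulVec_transpose, hT]
  set w := (C * (C + S)⁻¹) *ᵥ u with hw
  have hTw : (S⁻¹ + C⁻¹) *ᵥ w = S⁻¹ *ᵥ u := by
    rw [inv_add_inv_eq hS hC, hw, mulVec_mulVec]
    congr 1
    rw [mul_assoc, ← mul_assoc C⁻¹, nonsing_inv_mul _ hCu, one_mul, mul_assoc,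
      mul_nonsing_inv _ hPu, mul_one]
  have huw : u ⬝ᵥ ((C + S)⁻¹ *ᵥ u) + u ⬝ᵥ (S⁻¹ *ᵥ w) = u ⬝ᵥ (S⁻¹ *ᵥ u) := by
    rw [← dotProduct_add, hw, mulVec_mulVec, ← add_mulVec]
    congr 2
    calc (C + S)⁻¹ + S⁻¹ * (C * (C + S)⁻¹)
        = S⁻¹ * (S + C) * (C + S)⁻¹ := by
          rw [mul_add, nonsing_inv_mul _ hSu, add_mul, one_mul, mul_assoc]
      _ = S⁻¹ := by rw [add_comm S C, mul_assoc, mul_nonsing_inv _ hPu, mul_one]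
  have h1 := symm hS.inv u v
  have h2 := symm hS.inv w u
  have h3 := symm (hS.inv.add hC.inv) w v
  rw [hTw] at h3
  simp only [mulVec_sub, sub_dotProduct, dotProduct_sub, hTw]
  simp only [add_mulVec, dotProduct_add] at h3 ⊢
  linarith

lemma det_inv_add_inv_inv (hS : S.PosDef) (hC : C.PosDef) :
    S.det * C.det = (C + S).det * ((S⁻¹ + C⁻¹)⁻¹).det := by
  have h1 := hS.det_pos.ne'
  have h2 := hC.det_pos.ne'
  have h3 := (hC.add hS).det_pos.ne'
  rw [det_nonsing_inv, inv_add_inv_eq hS hC, det_mul, det_mul, det_nonsing_inv, det_nonsing_inv]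
  simp only [Ring.inverse_eq_inv']
  field_simp

/-- The joint density factors as evidence times posterior, where the posterior is Gaussian with
mean `C (C + S)⁻¹ (y - m) + m` and covariance `(S⁻¹ + C⁻¹)⁻¹`. -/
lemma gaussDensity_mul_gaussDensity (hS : S.PosDef) (hC : C.PosDef)
    (m y h : EuclideanSpace ℝ (Fin d)) :
    gaussDensity 0 S (y - h) * gaussDensity m C h = gaussDensity m (C + S) y *
      gaussDensity ((WithLp.equiv 2 (Fin d → ℝ)).symm
        ((C * (C + S)⁻¹) *ᵥ fun i => y i - m i) + m) (S⁻¹ + C⁻¹)⁻¹ h := by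
  have hT := hS.inv.add hC.inv
  have hsq := complete_square hS hC (fun i => y i - m i) (fun i => h i - m i)
  have hdet : S.det ^ (-(1 : ℝ) / 2) * C.det ^ (-(1 : ℝ) / 2) =
      (C + S).det ^ (-(1 : ℝ) / 2) * ((S⁻¹ + C⁻¹)⁻¹).det ^ (-(1 : ℝ) / 2) := by
    rw [← Real.mul_rpow hS.det_pos.le hC.det_pos.le,
      ← Real.mul_rpow (hC.add hS).det_pos.le hT.inv.det_pos.le, det_inv_add_inv_inv hS hC]
  have e1 : (fun i => (y - h) i - (0 : EuclideanSpace ℝ (Fin d)) i) =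
      (fun i => y i - m i) - (fun i => h i - m i) := by ext i; simp
  have e2 : (fun i => h i - ((WithLp.equiv 2 (Fin d → ℝ)).symm
        ((C * (C + S)⁻¹) *ᵥ fun i => y i - m i) + m) i) =
      (fun i => h i - m i) - (C * (C + S)⁻¹) *ᵥ fun i => y i - m i := by
    ext i
    simp only [PiLp.add_apply, WithLp.equiv_symm_apply, Pi.sub_apply]
    ring
  unfold gaussDensity
  rw [e1, e2, nonsing_inv_nonsing_inv _ hT.det_pos.ne'.isUnit]
  set a := (fun i => y i - m i)
  set b := (fun i => h i - m i)
  have hexp : Real.exp (-((a - b) ⬝ᵥ (S⁻¹ *ᵥ (a - b))) / 2) *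
      Real.exp (-(b ⬝ᵥ (C⁻¹ *ᵥ b)) / 2) = Real.exp (-(a ⬝ᵥ ((C + S)⁻¹ *ᵥ a)) / 2) *
      Real.exp (-((b - (C * (C + S)⁻¹) *ᵥ a) ⬝ᵥ
        ((S⁻¹ + C⁻¹) *ᵥ (b - (C * (C + S)⁻¹) *ᵥ a))) / 2) := by
    rw [← Real.exp_add, ← Real.exp_add]
    congr 1
    linarith
  linear_combination ((2 * Real.pi) ^ (-(d : ℝ) / 2)) ^ 2 *
    (hdet * Real.exp (-((a - b) ⬝ᵥ (S⁻¹ *ᵥ (a - b))) / 2) * Real.exp (-(b ⬝ᵥ (C⁻¹ *ᵥ b)) / 2)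
      + (C + S).det ^ (-(1 : ℝ) / 2) * ((S⁻¹ + C⁻¹)⁻¹).det ^ (-(1 : ℝ) / 2) * hexp)

end ProductOfGaussians

/-- Closed form of the GMM-based conditional mean estimator: for a Gaussian mixture channel
prior and Gaussian noise `N(0, Σ)`, the posterior mean given `y` is the responsibility-weighted
sum of the per-component LMMSE estimates `C_k (C_k+Σ)⁻¹ (y − μ_k) + μ_k`. -/
theorem gaussian_mixture_posterior_mean_eq_weighted_lmmse
    (d K : ℕ) (hd : 0 < d) (hK : 0 < K)
    (S : Matrix (Fin d) (Fin d) ℝ) (hS : S.PosDef)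
    (C : Fin K → Matrix (Fin d) (Fin d) ℝ) (hC : ∀ k, (C k).PosDef)
    (μ : Fin K → EuclideanSpace ℝ (Fin d))
    (p : Fin K → ℝ) (hp : ∀ k, 0 ≤ p k) (hpsum : ∑ k, p k = 1) (hppos : ∃ k, 0 < p k) :
    ∀ y : EuclideanSpace ℝ (Fin d),
      (∫ h, gaussDensity 0 S (y - h) * (∑ k, p k * gaussDensity (μ k) (C k) h))⁻¹ •
          (∫ h, (gaussDensity 0 S (y - h) * (∑ k, p k * gaussDensity (μ k) (C k) h)) • h) =
        ∑ k, (p k * gaussDensity (μ k) (C k + S) y /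
              ∑ i, p i * gaussDensity (μ i) (C i + S) y) •
            ((WithLp.equiv 2 (Fin d → ℝ)).symm ((C k * (C k + S)⁻¹) *ᵥ fun i => y i - μ k i)
              + μ k) := by
  intro y
  have hT := fun k => (hS.inv.add (hC k).inv).inv
  have hjoint : ∀ h, gaussDensity 0 S (y - h) * (∑ k, p k * gaussDensity (μ k) (C k) h) =
      ∑ k, (p k * gaussDensity (μ k) (C k + S) y) *
        gaussDensity ((WithLp.equiv 2 (Fin d → ℝ)).symm
          ((C k * (C k + S)⁻¹) *ᵥ fun i => y i - μ k i) + μ k) (S⁻¹ + (C k)⁻¹)⁻¹ h := fun h => by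
    rw [Finset.mul_sum]
    refine Finset.sum_congr rfl fun k _ => ?_
    rw [mul_left_comm, gaussDensity_mul_gaussDensity hS (hC k), mul_assoc]
  have hden : ∫ h, gaussDensity 0 S (y - h) * (∑ k, p k * gaussDensity (μ k) (C k) h) =
      ∑ k, p k * gaussDensity (μ k) (C k + S) y := by
    simp_rw [hjoint]
    rw [integral_finsetSum _ fun k _ => (integrable_gaussDensity (hT k) _).const_mul _]
    simp_rw [integral_const_mul, integral_gaussDensity (hT _), mul_one]
  have hnum : ∫ h, (gaussDensity 0 S (y - h) * (∑ k, p k * gaussDensity (μ k) (C k) h)) • h =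
      ∑ k, (p k * gaussDensity (μ k) (C k + S) y) •
        ((WithLp.equiv 2 (Fin d → ℝ)).symm ((C k * (C k + S)⁻¹) *ᵥ fun i => y i - μ k i)
          + μ k) := by
    simp_rw [hjoint, Finset.sum_smul, mul_smul]
    rw [integral_finsetSum _ fun k _ =>
      ((integrable_gaussDensity_smul (hT k) _).fun_smul _).fun_smul _]
    simp_rw [integral_smul, integral_gaussDensity_smul (hT _)]
  rw [hden, hnum, Finset.smul_sum]
  exact Finset.sum_congr rfl fun k _ => by rw [smul_smul, div_eq_inv_mul]
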